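/- Let ν > 0, ξ > 0 and λ ∈ ℝ. Then the function u : (0,∞) → ℝ defined by u(x) = e^{−ξx²/2} · x^{1/2+ν} · M( −(λ − 2ξ(1+ν))/(4ξ), 1+ν, ξx² ) is twice differentiable and satisfies, for every x > 0, −u''(x) + ξ²x² u(x) + ((ν² − 1/4)/x²) u(x) = λ u(x). -/

import Mathlib

open MeasureTheory Real Set

/-- Pochhammer symbol (rising factorial) `(c)_k = c (c+1) ⋯ (c+k−1)`. -/
noncomputable def poch (c : ℝ) (k : ℕ) : ℝ := (ascPochhammer ℝ k).eval c

/-- Kummer's confluent hypergeometric function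
`M(a,b,z) = ∑_{k=0}^∞ ((a)_k / ((b)_k · k!)) z^k`. -/
noncomputable def kummerM (a b z : ℝ) : ℝ :=
  ∑' k : ℕ, poch a k / (poch b k * (Nat.factorial k : ℝ)) * z ^ k

/-- Power series with coefficients `c`. -/
noncomputable def psum (c : ℕ → ℝ) (z : ℝ) : ℝ := ∑' n : ℕ, c n * z ^ n

/-- Coefficients of the differentiated series. -/
noncomputable def dco (c : ℕ → ℝ) (n : ℕ) : ℝ := ((n : ℝ) + 1) * c (n + 1)

/-- The series converges absolutely everywhere. -/
def Entire (c : ℕ → ℝ) : Prop := ∀ r : ℝ, 0 < r → Summable fun n : ℕ => |c n| * r ^ n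

lemma entire_summable {c : ℕ → ℝ} (hc : Entire c) (z : ℝ) : Summable fun n : ℕ => c n * z ^ n := by
  refine Summable.of_norm_bounded (hc (|z| + 1) (by positivity)) fun n => ?_
  rw [norm_mul, norm_pow, Real.norm_eq_abs, Real.norm_eq_abs]
  gcongr
  linarith

lemma entire_dco {c : ℕ → ℝ} (hc : Entire c) : Entire (dco c) := by
  intro r hr
  have h := (summable_nat_add_iff 1).2 (hc (2 * (r + 1)) (by positivity))
  refine Summable.of_nonneg_of_le (fun n => by positivity) (fun n => ?_) h
  have h1 : ((n : ℝ) + 1) ≤ 2 ^ (n + 1) := by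
    have := (Nat.lt_two_pow_self (n := n + 1)).le
    exact_mod_cast this
  have h2 : r ^ n ≤ (r + 1) ^ (n + 1) := by
    calc r ^ n ≤ (r + 1) ^ n := by gcongr; linarith
      _ ≤ (r + 1) ^ (n + 1) := pow_le_pow_right₀ (by linarith) (Nat.le_succ n)
  unfold dco
  rw [abs_mul, abs_of_nonneg (by positivity : (0 : ℝ) ≤ (n : ℝ) + 1), mul_pow]
  calc ((n : ℝ) + 1) * |c (n + 1)| * r ^ n = |c (n + 1)| * (((n : ℝ) + 1) * r ^ n) := by ring
    _ ≤ |c (n + 1)| * (2 ^ (n + 1) * (r + 1) ^ (n + 1)) := by gcongr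

lemma psum_hasDerivAt {c : ℕ → ℝ} (hc : Entire c) (z : ℝ) :
    HasDerivAt (psum c) (psum (dco c) z) z := by
  set R := |z| + 1 with hR
  have hR0 : 0 < R := by positivity
  have hu : Summable fun n : ℕ => |c n| * ((n : ℝ) * R ^ (n - 1)) := by
    rw [← summable_nat_add_iff 1]
    refine (entire_dco hc R hR0).congr fun n => ?_
    unfold dco
    rw [abs_mul, abs_of_nonneg (by positivity : (0 : ℝ) ≤ (n : ℝ) + 1)]
    push_cast
    ring
  have hz : z ∈ Metric.ball (0 : ℝ) R := by simp [hR]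
  have key := hasDerivAt_tsum_of_isPreconnected (g := fun n y => c n * y ^ n)
    (g' := fun n y => c n * ((n : ℝ) * y ^ (n - 1))) hu Metric.isOpen_ball
    (convex_ball (0 : ℝ) R).isPreconnected
    (fun n y _ => (hasDerivAt_pow n y).const_mul (c n))
    (fun n y hy => by
      have hy' : |y| ≤ R := by
        have := mem_ball_zero_iff.1 hy
        rw [Real.norm_eq_abs] at this
        exact this.le
      rw [norm_mul, norm_mul, norm_pow, Real.norm_eq_abs, Real.norm_eq_abs, Real.norm_eq_abs,
        Nat.abs_cast]
      gcongr)
    hz (entire_summable hc z) hz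
  have hs : Summable fun n : ℕ => c n * ((n : ℝ) * z ^ (n - 1)) := by
    rw [← summable_nat_add_iff 1]
    refine (entire_summable (entire_dco hc) z).congr fun n => ?_
    unfold dco
    push_cast
    ring
  have he : (∑' n : ℕ, c n * ((n : ℝ) * z ^ (n - 1))) = psum (dco c) z := by
    rw [hs.tsum_eq_zero_add]
    unfold psum dco
    simp only [Nat.cast_zero, zero_mul, mul_zero, zero_add]
    refine tsum_congr fun n => ?_
    push_cast
    ring
  rw [← he]
  exact key

lemma mul_psum_dco {c : ℕ → ℝ} (hc : Entire c) (z : ℝ) :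
    HasSum (fun n : ℕ => (n : ℝ) * c n * z ^ n) (z * psum (dco c) z) := by
  rw [← hasSum_nat_add_iff' 1]
  have h := ((entire_summable (entire_dco hc) z).hasSum).mul_left z
  simp only [Finset.range_one, Finset.sum_singleton, Nat.cast_zero, zero_mul, sub_zero]
  have e : (fun n : ℕ => ((n + 1 : ℕ) : ℝ) * c (n + 1) * z ^ (n + 1)) =
      fun n : ℕ => z * (dco c n * z ^ n) := by
    funext n
    unfold dco
    push_cast
    ring
  rw [e]
  exact h

/-- Kummer coefficients. -/
noncomputable def kco (a b : ℝ) (k : ℕ) : ℝ := poch a k / (poch b k * (Nat.factorial k : ℝ))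

lemma poch_succ (a : ℝ) (k : ℕ) : poch a (k + 1) = poch a k * (a + k) := by
  unfold poch
  rw [ascPochhammer_succ_eval]

lemma poch_pos' {b : ℝ} (hb : 0 < b) (k : ℕ) : 0 < poch b k := ascPochhammer_pos k b hb

lemma kco_succ {a b : ℝ} (hb : 0 < b) (n : ℕ) :
    ((n : ℝ) + 1) * (b + n) * kco a b (n + 1) = (a + n) * kco a b n := by
  have h1 := (poch_pos' hb n).ne'
  have h2 : b + n ≠ 0 := by positivity
  have h3 : (n : ℝ) + 1 ≠ 0 := by positivity
  have h4 : (Nat.factorial n : ℝ) ≠ 0 := by positivity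
  unfold kco
  rw [poch_succ, poch_succ, Nat.factorial_succ]
  push_cast
  field_simp

lemma entire_kco {a b : ℝ} (hb : 0 < b) : Entire (kco a b) := by
  intro r hr
  refine summable_of_ratio_norm_eventually_le (r := 1 / 2) (by norm_num) ?_
  obtain ⟨N, hN⟩ := exists_nat_ge (2 * r * (|a| + 1))
  filter_upwards [Filter.eventually_ge_atTop N] with n hn
  have hn' : (N : ℝ) ≤ n := by exact_mod_cast hn
  have hk := congrArg abs (kco_succ (a := a) hb n)
  rw [abs_mul _ (kco a b (n + 1)), abs_mul (a + n), abs_of_pos (by positivity : 0 < ((n : ℝ) + 1) * (b + n))] at hk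
  have ha : |a + n| ≤ (|a| + 1) * (n + 1) := by
    have := abs_add_le a (n : ℝ)
    rw [Nat.abs_cast] at this
    nlinarith [abs_nonneg a, (Nat.cast_nonneg n : (0 : ℝ) ≤ n),
      mul_nonneg (abs_nonneg a) (Nat.cast_nonneg n : (0 : ℝ) ≤ n)]
  rw [Real.norm_of_nonneg (by positivity), Real.norm_of_nonneg (by positivity)]
  have hx := abs_nonneg (kco a b n)
  have h5 : (b + n) * |kco a b (n + 1)| ≤ (|a| + 1) * |kco a b n| := by
    have h3 : 0 < (n : ℝ) + 1 := by positivity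
    refine le_of_mul_le_mul_left ?_ h3
    calc _ = |a + n| * |kco a b n| := by rw [← hk]; ring
      _ ≤ (|a| + 1) * (n + 1) * |kco a b n| := by gcongr
      _ = _ := by ring
  have hbn : 2 * r * (|a| + 1) ≤ b + n := by linarith
  have h6 : 2 * r * |kco a b (n + 1)| ≤ |kco a b n| := by
    refine le_of_mul_le_mul_left ?_ (by positivity : 0 < |a| + 1)
    calc _ = 2 * r * (|a| + 1) * |kco a b (n + 1)| := by ring
      _ ≤ (b + n) * |kco a b (n + 1)| := by gcongr
      _ ≤ _ := h5
  calc |kco a b (n + 1)| * r ^ (n + 1) = (2 * r * |kco a b (n + 1)|) * (r ^ n / 2) := by ring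
    _ ≤ |kco a b n| * (r ^ n / 2) := by gcongr
    _ = _ := by ring

lemma kummer_ode {a b : ℝ} (hb : 0 < b) (z : ℝ) :
    z * psum (dco (dco (kco a b))) z + b * psum (dco (kco a b)) z
      = z * psum (dco (kco a b)) z + a * psum (kco a b) z := by
  have hc := entire_kco (a := a) hb
  have h1 := (mul_psum_dco (entire_dco hc) z).add
    ((entire_summable (entire_dco hc) z).hasSum.mul_left b)
  have h2 := (mul_psum_dco hc z).add ((entire_summable hc z).hasSum.mul_left a)
  refine h1.tsum_eq.symm.trans (Eq.trans ?_ h2.tsum_eq)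
  refine tsum_congr fun n => ?_
  have := kco_succ (a := a) hb n
  unfold dco
  linear_combination (z ^ n) * this

lemma weight_hasDerivAt (ξ s : ℝ) {f : ℝ → ℝ} {f' x : ℝ} (hx : 0 < x) (hf : HasDerivAt f f' x) :
    HasDerivAt (fun y : ℝ => Real.exp (-ξ * y ^ 2 / 2) * y ^ s * f y)
      (Real.exp (-ξ * x ^ 2 / 2) * x ^ s * ((-ξ * x + s / x) * f x + f')) x := by
  have h0 : HasDerivAt (fun y : ℝ => -ξ * y ^ 2 / 2) (-ξ * x) x := by
    have := ((hasDerivAt_pow 2 x).const_mul (-ξ)).div_const 2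
    refine this.congr_deriv ?_
    norm_num
    ring
  have h1 := h0.exp
  have h2 := Real.hasDerivAt_rpow_const (x := x) (p := s) (Or.inl hx.ne')
  have h3 := (h1.mul h2).mul hf
  refine h3.congr_deriv ?_
  simp only [Pi.mul_apply]
  rw [Real.rpow_sub hx, Real.rpow_one]
  field_simp

/-- For `ν > 0`, `ξ > 0` and `λ ∈ ℝ`, the function
`u(x) = e^{−ξx²/2} x^{1/2+ν} M(−(λ − 2ξ(1+ν))/(4ξ), 1+ν, ξx²)` is twice differentiable
on `(0,∞)` and satisfies `−u'' + ξ²x²u + ((ν²−1/4)/x²)u = λu` for every `x > 0`. -/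
theorem kummer_ansatz_solves_eigenvalue_equation (ν ξ lam : ℝ) (hν : 0 < ν) (hξ : 0 < ξ) :
    (∀ x : ℝ, 0 < x → DifferentiableAt ℝ
      (fun y : ℝ => Real.exp (-ξ * y ^ 2 / 2) * y ^ ((1 : ℝ) / 2 + ν) *
        kummerM (-((lam - 2 * ξ * (1 + ν)) / (4 * ξ))) (1 + ν) (ξ * y ^ 2)) x) ∧
    (∀ x : ℝ, 0 < x → DifferentiableAt ℝ
      (deriv (fun y : ℝ => Real.exp (-ξ * y ^ 2 / 2) * y ^ ((1 : ℝ) / 2 + ν) *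
        kummerM (-((lam - 2 * ξ * (1 + ν)) / (4 * ξ))) (1 + ν) (ξ * y ^ 2))) x) ∧
    (∀ x : ℝ, 0 < x →
      -deriv (deriv (fun y : ℝ => Real.exp (-ξ * y ^ 2 / 2) * y ^ ((1 : ℝ) / 2 + ν) *
          kummerM (-((lam - 2 * ξ * (1 + ν)) / (4 * ξ))) (1 + ν) (ξ * y ^ 2))) x
        + ξ ^ 2 * x ^ 2 *
          (Real.exp (-ξ * x ^ 2 / 2) * x ^ ((1 : ℝ) / 2 + ν) *
            kummerM (-((lam - 2 * ξ * (1 + ν)) / (4 * ξ))) (1 + ν) (ξ * x ^ 2))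
        + ((ν ^ 2 - 1 / 4) / x ^ 2) *
          (Real.exp (-ξ * x ^ 2 / 2) * x ^ ((1 : ℝ) / 2 + ν) *
            kummerM (-((lam - 2 * ξ * (1 + ν)) / (4 * ξ))) (1 + ν) (ξ * x ^ 2))
        = lam * (Real.exp (-ξ * x ^ 2 / 2) * x ^ ((1 : ℝ) / 2 + ν) *
            kummerM (-((lam - 2 * ξ * (1 + ν)) / (4 * ξ))) (1 + ν) (ξ * x ^ 2))) := by
  set a := -((lam - 2 * ξ * (1 + ν)) / (4 * ξ)) with ha
  have hb : 0 < 1 + ν := by linarith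
  have hM : ∀ z, kummerM a (1 + ν) z = psum (kco a (1 + ν)) z := fun z => rfl
  simp only [hM]
  have hc := entire_kco (a := a) hb
  have hode := kummer_ode (a := a) hb
  have dM := psum_hasDerivAt hc
  have dM1 := psum_hasDerivAt (entire_dco hc)
  set M := psum (kco a (1 + ν))
  set M1 := psum (dco (kco a (1 + ν)))
  set M2 := psum (dco (dco (kco a (1 + ν))))
  set s := (1 : ℝ) / 2 + ν with hs
  have hq : ∀ x : ℝ, HasDerivAt (fun y : ℝ => ξ * y ^ 2) (2 * ξ * x) x := fun x => by
    refine ((hasDerivAt_pow 2 x).const_mul ξ).congr_deriv ?_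
    norm_num
    ring
  have dMq : ∀ x : ℝ, HasDerivAt (fun y : ℝ => M (ξ * y ^ 2)) (M1 (ξ * x ^ 2) * (2 * ξ * x)) x :=
    fun x => HasDerivAt.comp (h₂ := M) x (dM (ξ * x ^ 2)) (hq x)
  have dM1q : ∀ x : ℝ,
      HasDerivAt (fun y : ℝ => M1 (ξ * y ^ 2)) (M2 (ξ * x ^ 2) * (2 * ξ * x)) x :=
    fun x => HasDerivAt.comp (h₂ := M1) x (dM1 (ξ * x ^ 2)) (hq x)
  have D1 := fun (x : ℝ) (hx : 0 < x) => weight_hasDerivAt ξ s hx (dMq x)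
  have D2 : ∀ x : ℝ, 0 < x → HasDerivAt
      (deriv (fun y : ℝ => Real.exp (-ξ * y ^ 2 / 2) * y ^ s * M (ξ * y ^ 2)))
      (Real.exp (-ξ * x ^ 2 / 2) * x ^ s *
        ((-ξ * x + s / x) * ((-ξ * x + s / x) * M (ξ * x ^ 2) + M1 (ξ * x ^ 2) * (2 * ξ * x)) +
          ((-ξ - s / x ^ 2) * M (ξ * x ^ 2) + (-ξ * x + s / x) * (M1 (ξ * x ^ 2) * (2 * ξ * x))
            + (M2 (ξ * x ^ 2) * (2 * ξ * x) * (2 * ξ * x) + M1 (ξ * x ^ 2) * (2 * ξ))))) x := by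
    intro x hx
    have e1 : HasDerivAt (fun y : ℝ => -ξ * y + s / y) (-ξ - s / x ^ 2) x := by
      have := ((hasDerivAt_id x).const_mul (-ξ)).add ((hasDerivAt_inv hx.ne').const_mul s)
      refine this.congr_deriv ?_
      ring
    have e2 : HasDerivAt (fun y : ℝ => 2 * ξ * y) (2 * ξ) x := by
      simpa using (hasDerivAt_id x).const_mul (2 * ξ)
    have e3 := (e1.mul (dMq x)).add ((dM1q x).mul e2)
    have e4 := weight_hasDerivAt ξ s hx e3
    refine e4.congr_of_eventuallyEq ?_
    filter_upwards [lt_mem_nhds hx] with y hy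
    rw [(D1 y hy).deriv]
    rfl
  refine ⟨fun x hx => (D1 x hx).differentiableAt, fun x hx => (D2 x hx).differentiableAt,
    fun x hx => ?_⟩
  rw [(D2 x hx).deriv]
  have ho := hode (ξ * x ^ 2)
  have hlam : lam = 2 * ξ * (1 + ν) - 4 * ξ * a := by
    rw [ha]
    field_simp
    ring
  rw [hlam, hs]
  generalize Real.exp (-ξ * x ^ 2 / 2) * x ^ ((1 : ℝ) / 2 + ν) = W
  clear_value a M M1 M2
  field_simp
  linear_combination (-64 * ξ * x ^ 2 * W) * ho
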